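/- Let A be a commutative Banach algebra. Then the following are equivalent: (i) A is weakly amenable; (ii) A is (2k+1)-weakly amenable for some k ≥ 0; (iii) A is ideally amenable; (iv) A is (2k+1)-ideally amenable for some k ≥ 0; (v) A is permanently ideally amenable. -/

import Mathlib

/- ## Core definitions: Banach bimodules over (non-unital) complex Banach algebras,
iterated dual modules, derivations, ideal amenability, and Arens extensions. -/

noncomputable section

open ContinuousLinearMap

universe u

/-- The topological dual of a complex normed space. -/
abbrev Dl (X : Type u) [SeminormedAddCommGroup X] [NormedSpace ℂ X] : Type u := X →L[ℂ] ℂ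

/-- The canonical embedding of a normed space into its double dual. -/
def inclDD (X : Type u) [SeminormedAddCommGroup X] [NormedSpace ℂ X] : X →L[ℂ] Dl (Dl X) :=
  ContinuousLinearMap.apply ℂ ℂ

@[simp] lemma inclDD_apply {X : Type u} [SeminormedAddCommGroup X] [NormedSpace ℂ X]
    (x : X) (f : Dl X) : inclDD X x f = f x := rfl

/-- A (bounded) Banach bimodule structure of a complex Banach algebra `A`
on a complex Banach space `X`:  `l a x = a • x` and `r a x = x • a`. -/
structure Bimodule (A : Type u) [NonUnitalNormedRing A] [NormedSpace ℂ A]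
    [SMulCommClass ℂ A A] [IsScalarTower ℂ A A]
    (X : Type u) [NormedAddCommGroup X] [NormedSpace ℂ X] : Type u where
  l : A →L[ℂ] X →L[ℂ] X
  r : A →L[ℂ] X →L[ℂ] X
  l_mul : ∀ a b x, l (a * b) x = l a (l b x)
  r_mul : ∀ a b x, r (a * b) x = r b (r a x)
  lr : ∀ a b x, l a (r b x) = r b (l a x)

variable {A : Type u} [NonUnitalNormedRing A] [NormedSpace ℂ A]
  [SMulCommClass ℂ A A] [IsScalarTower ℂ A A]

/-- The dual module of a Banach bimodule: `(a·f)(x) = f(x·a)` and `(f·a)(x) = f(a·x)`. -/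
def Bimodule.dualMod {X : Type u} [NormedAddCommGroup X] [NormedSpace ℂ X]
    (M : Bimodule A X) : Bimodule A (Dl X) where
  l := ((ContinuousLinearMap.compL ℂ X X ℂ).flip).comp M.r
  r := ((ContinuousLinearMap.compL ℂ X X ℂ).flip).comp M.l
  l_mul := fun a b f => by
    ext x
    simp [M.r_mul]
  r_mul := fun a b f => by
    ext x
    simp [M.l_mul]
  lr := fun a b f => by
    ext x
    simp [M.lr]

@[simp] lemma Bimodule.dualMod_l_apply {X : Type u} [NormedAddCommGroup X] [NormedSpace ℂ X]
    (M : Bimodule A X) (a : A) (f : Dl X) (x : X) :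
    M.dualMod.l a f x = f (M.r a x) := by
  simp [Bimodule.dualMod]

@[simp] lemma Bimodule.dualMod_r_apply {X : Type u} [NormedAddCommGroup X] [NormedSpace ℂ X]
    (M : Bimodule A X) (a : A) (f : Dl X) (x : X) :
    M.dualMod.r a f x = f (M.l a x) := by
  simp [Bimodule.dualMod]

/-- A Banach `A`-bimodule, bundled with its underlying space. -/
structure BMod (A : Type u) [NonUnitalNormedRing A] [NormedSpace ℂ A]
    [SMulCommClass ℂ A A] [IsScalarTower ℂ A A] : Type (u + 1) where
  X : Type u
  [xGroup : NormedAddCommGroup X]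
  [xSpace : NormedSpace ℂ X]
  act : Bimodule A X

attribute [instance] BMod.xGroup BMod.xSpace

/-- The dual of a bundled Banach bimodule. -/
def BMod.dualObj (M : BMod A) : BMod A :=
  ⟨Dl M.X, M.act.dualMod⟩

/-- The `n`-th dual of a bundled Banach bimodule (`iter 0 = M`). -/
def BMod.iter (M : BMod A) : ℕ → BMod A
  | 0 => M
  | n + 1 => (M.iter n).dualObj

/-- A bounded derivation from `A` into the Banach `A`-bimodule `M`. -/
def IsDerivation (M : BMod A) (D : A →L[ℂ] M.X) : Prop :=
  ∀ a b : A, D (a * b) = M.act.l a (D b) + M.act.r b (D a)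

/-- An inner derivation.  -/
def IsInner (M : BMod A) (D : A →L[ℂ] M.X) : Prop :=
  ∃ x : M.X, ∀ a : A, D a = M.act.l a x - M.act.r a x

/-- `H¹(A, M) = {0}` : every bounded derivation into `M` is inner. -/
def H1Zero (M : BMod A) : Prop :=
  ∀ D : A →L[ℂ] M.X, IsDerivation M D → IsInner M D

/-- A closed two-sided ideal of the Banach algebra `A`. -/
structure ClosedIdeal (A : Type u) [NonUnitalNormedRing A] [NormedSpace ℂ A]
    [SMulCommClass ℂ A A] [IsScalarTower ℂ A A] : Type u where
  car : Submodule ℂ A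
  isClosed : IsClosed (car : Set A)
  mul_mem_left : ∀ (a x : A), x ∈ car → a * x ∈ car
  mul_mem_right : ∀ (a x : A), x ∈ car → x * a ∈ car

namespace ClosedIdeal

variable (I : ClosedIdeal A)

/-- Left multiplication action of `A` on a closed two-sided ideal. -/
def lAct : A →L[ℂ] ↥I.car →L[ℂ] ↥I.car :=
  LinearMap.mkContinuous₂
    (LinearMap.mk₂ ℂ
      (fun a x => (⟨a * (x : A), I.mul_mem_left a x x.2⟩ : ↥I.car))
      (fun a b x => Subtype.ext <| by simp [add_mul])
      (fun c a x => Subtype.ext <| by simp [smul_mul_assoc])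
      (fun a x y => Subtype.ext <| by simp [mul_add])
      (fun c a x => Subtype.ext <| by simp [mul_smul_comm]))
    1
    (fun a x => by
      simp only [LinearMap.mk₂_apply, one_mul]
      calc ‖(⟨a * (x : A), I.mul_mem_left a x x.2⟩ : ↥I.car)‖ = ‖a * (x : A)‖ := rfl
        _ ≤ ‖a‖ * ‖(x : A)‖ := norm_mul_le _ _
        _ = ‖a‖ * ‖x‖ := by rw [Submodule.coe_norm])

/-- Right multiplication action of `A` on a closed two-sided ideal. -/
def rAct : A →L[ℂ] ↥I.car →L[ℂ] ↥I.car :=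
  LinearMap.mkContinuous₂
    (LinearMap.mk₂ ℂ
      (fun a x => (⟨(x : A) * a, I.mul_mem_right a x x.2⟩ : ↥I.car))
      (fun a b x => Subtype.ext <| by simp [mul_add])
      (fun c a x => Subtype.ext <| by simp [mul_smul_comm])
      (fun a x y => Subtype.ext <| by simp [add_mul])
      (fun c a x => Subtype.ext <| by simp [smul_mul_assoc]))
    1
    (fun a x => by
      simp only [LinearMap.mk₂_apply, one_mul]
      calc ‖(⟨(x : A) * a, I.mul_mem_right a x x.2⟩ : ↥I.car)‖ = ‖(x : A) * a‖ := rfl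
        _ ≤ ‖(x : A)‖ * ‖a‖ := norm_mul_le _ _
        _ = ‖x‖ * ‖a‖ := by rw [Submodule.coe_norm]
        _ = ‖a‖ * ‖x‖ := mul_comm _ _)

@[simp] lemma lAct_apply (a : A) (x : ↥I.car) : (I.lAct a x : A) = a * (x : A) := rfl
@[simp] lemma rAct_apply (a : A) (x : ↥I.car) : (I.rAct a x : A) = (x : A) * a := rfl

/-- A closed two-sided ideal as a Banach `A`-bimodule. -/
def toBMod : BMod A where
  X := ↥I.car
  act :=
    { l := I.lAct
      r := I.rAct
      l_mul := fun a b x => Subtype.ext <| by simp [mul_assoc]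
      r_mul := fun a b x => Subtype.ext <| by simp [mul_assoc]
      lr := fun a b x => Subtype.ext <| by simp [mul_assoc] }

end ClosedIdeal

/-- The Banach algebra `A` as a Banach bimodule over itself. -/
def regBMod (A : Type u) [NonUnitalNormedRing A] [NormedSpace ℂ A]
    [SMulCommClass ℂ A A] [IsScalarTower ℂ A A] : BMod A where
  X := A
  act :=
    { l := ContinuousLinearMap.mul ℂ A
      r := (ContinuousLinearMap.mul ℂ A).flip
      l_mul := fun a b x => by simp [mul_assoc]
      r_mul := fun a b x => by simp [mul_assoc]
      lr := fun a b x => by simp [mul_assoc] }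

/-- `A` is `n`-`I`-weakly amenable: `H¹(A, I⁽ⁿ⁾) = {0}`. -/
def NIWeaklyAmenable (I : ClosedIdeal A) (n : ℕ) : Prop :=
  H1Zero (I.toBMod.iter n)

/-- `A` is `n`-ideally amenable. -/
def NIdeallyAmenable (A : Type u) [NonUnitalNormedRing A] [NormedSpace ℂ A]
    [SMulCommClass ℂ A A] [IsScalarTower ℂ A A] (n : ℕ) : Prop :=
  ∀ I : ClosedIdeal A, H1Zero (I.toBMod.iter n)

/-- `A` is `n`-weakly amenable: `H¹(A, A⁽ⁿ⁾) = {0}`. -/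
def NWeaklyAmenable (A : Type u) [NonUnitalNormedRing A] [NormedSpace ℂ A]
    [SMulCommClass ℂ A A] [IsScalarTower ℂ A A] (n : ℕ) : Prop :=
  H1Zero ((regBMod A).iter n)

/- ## Arens-type extensions of bounded bilinear maps to biduals -/

section Arens

variable {E F G : Type*}
  [SeminormedAddCommGroup E] [NormedSpace ℂ E]
  [SeminormedAddCommGroup F] [NormedSpace ℂ F]
  [SeminormedAddCommGroup G] [NormedSpace ℂ G]

/-- Auxiliary map for the Arens extension:
`arT b Ψ g = (e ↦ Ψ (g ∘ b e))`. -/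
def arT (b : E →L[ℂ] F →L[ℂ] G) (Ψ : Dl (Dl F)) (g : Dl G) : Dl E :=
  LinearMap.mkContinuous
    { toFun := fun e => Ψ (g.comp (b e))
      map_add' := fun e e' => by simp only [map_add, ContinuousLinearMap.comp_add, map_add]
      map_smul' := fun c e => by
        simp only [map_smul, ContinuousLinearMap.comp_smul, map_smul, RingHom.id_apply] }
    (‖Ψ‖ * ‖g‖ * ‖b‖)
    (fun e => by
      calc ‖Ψ (g.comp (b e))‖ ≤ ‖Ψ‖ * ‖g.comp (b e)‖ := Ψ.le_opNorm _
        _ ≤ ‖Ψ‖ * (‖g‖ * ‖b e‖) := by gcongr; exact g.opNorm_comp_le _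
        _ ≤ ‖Ψ‖ * (‖g‖ * (‖b‖ * ‖e‖)) := by gcongr; exact b.le_opNorm e
        _ = ‖Ψ‖ * ‖g‖ * ‖b‖ * ‖e‖ := by ring)

@[simp] lemma arT_apply (b : E →L[ℂ] F →L[ℂ] G) (Ψ : Dl (Dl F)) (g : Dl G)
    (e : E) : arT b Ψ g e = Ψ (g.comp (b e)) := rfl

lemma arT_add_right (b : E →L[ℂ] F →L[ℂ] G) (Ψ Ψ' : Dl (Dl F)) (g : Dl G) :
    arT b (Ψ + Ψ') g = arT b Ψ g + arT b Ψ' g := by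
  ext e; simp

lemma arT_smul_right (b : E →L[ℂ] F →L[ℂ] G) (c : ℂ) (Ψ : Dl (Dl F)) (g : Dl G) :
    arT b (c • Ψ) g = c • arT b Ψ g := by
  ext e; simp

lemma arT_add_g (b : E →L[ℂ] F →L[ℂ] G) (Ψ : Dl (Dl F)) (g g' : Dl G) :
    arT b Ψ (g + g') = arT b Ψ g + arT b Ψ g' := by
  ext e; simp [ContinuousLinearMap.add_comp]

lemma arT_smul_g (b : E →L[ℂ] F →L[ℂ] G) (c : ℂ) (Ψ : Dl (Dl F)) (g : Dl G) :
    arT b Ψ (c • g) = c • arT b Ψ g := by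
  ext e; simp [ContinuousLinearMap.smul_comp]

/-- One half of the Arens extension: `(arExtFun b Φ Ψ) g = Φ (e ↦ Ψ (g ∘ b e))`. -/
def arExtFun (b : E →L[ℂ] F →L[ℂ] G) (Φ : Dl (Dl E)) (Ψ : Dl (Dl F)) :
    Dl (Dl G) :=
  LinearMap.mkContinuous
    { toFun := fun g => Φ (arT b Ψ g)
      map_add' := fun g g' => by simp only [arT_add_g, map_add]
      map_smul' := fun c g => by simp only [arT_smul_g, map_smul, RingHom.id_apply] }
    (‖Φ‖ * ‖Ψ‖ * ‖b‖)
    (fun g => by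
      calc ‖Φ (arT b Ψ g)‖ ≤ ‖Φ‖ * ‖arT b Ψ g‖ := Φ.le_opNorm _
        _ ≤ ‖Φ‖ * (‖Ψ‖ * ‖g‖ * ‖b‖) := by
            gcongr
            exact LinearMap.mkContinuous_norm_le _ (by positivity) _
        _ = ‖Φ‖ * ‖Ψ‖ * ‖b‖ * ‖g‖ := by ring)

@[simp] lemma arExtFun_apply (b : E →L[ℂ] F →L[ℂ] G) (Φ : Dl (Dl E))
    (Ψ : Dl (Dl F)) (g : Dl G) : arExtFun b Φ Ψ g = Φ (arT b Ψ g) := rfl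

lemma arExtFun_norm_le (b : E →L[ℂ] F →L[ℂ] G) (Φ : Dl (Dl E))
    (Ψ : Dl (Dl F)) : ‖arExtFun b Φ Ψ‖ ≤ ‖Φ‖ * ‖Ψ‖ * ‖b‖ :=
  LinearMap.mkContinuous_norm_le _ (by positivity) _

/-- The (first-)Arens-type extension of a bounded bilinear map `b : E × F → G` to the
biduals, obtained by iterated weak* limits (outer limit in the first variable):
`(arExt b Φ Ψ) g = Φ (e ↦ Ψ (g ∘ b e))`. -/
def arExt (b : E →L[ℂ] F →L[ℂ] G) :
    Dl (Dl E) →L[ℂ] Dl (Dl F) →L[ℂ] Dl (Dl G) :=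
  LinearMap.mkContinuous₂
    (LinearMap.mk₂ ℂ (arExtFun b)
      (fun Φ Φ' Ψ => by ext g; simp)
      (fun c Φ Ψ => by ext g; simp)
      (fun Φ Ψ Ψ' => by ext g; simp [arT_add_right])
      (fun c Φ Ψ => by ext g; simp [arT_smul_right]))
    ‖b‖
    (fun Φ Ψ => by
      simp only [LinearMap.mk₂_apply]
      exact (arExtFun_norm_le b Φ Ψ).trans (le_of_eq (by ring)))

@[simp] lemma arExt_apply (b : E →L[ℂ] F →L[ℂ] G) (Φ : Dl (Dl E))
    (Ψ : Dl (Dl F)) (g : Dl G) : arExt b Φ Ψ g = Φ (arT b Ψ g) := rfl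

end Arens

/- ## Arens products and Arens module extensions -/

/-- The first Arens product on the bidual of a Banach algebra. -/
def arensMul (A : Type u) [NonUnitalNormedRing A] [NormedSpace ℂ A]
    [SMulCommClass ℂ A A] [IsScalarTower ℂ A A] :
    Dl (Dl A) →L[ℂ] Dl (Dl A) →L[ℂ] Dl (Dl A) :=
  arExt (ContinuousLinearMap.mul ℂ A)

/-- The second Arens product on the bidual of a Banach algebra. -/
def arensMul₂ (A : Type u) [NonUnitalNormedRing A] [NormedSpace ℂ A]
    [SMulCommClass ℂ A A] [IsScalarTower ℂ A A]
    (F G : Dl (Dl A)) : Dl (Dl A) :=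
  arExt (ContinuousLinearMap.mul ℂ A).flip G F

namespace Bimodule

variable {X : Type u} [NormedAddCommGroup X] [NormedSpace ℂ X]

/-- First (iterated weak*-limit) extension of the left action:
`a'' · x'' = w*-lim_i lim_j a_i • x_j`. -/
def lExt (M : Bimodule A X) (F : Dl (Dl A)) (ξ : Dl (Dl X)) :
    Dl (Dl X) :=
  arExt M.l F ξ

/-- Second extension of the left action: `a'' · x'' = w*-lim_j lim_i a_i • x_j`. -/
def lExt₂ (M : Bimodule A X) (F : Dl (Dl A)) (ξ : Dl (Dl X)) :
    Dl (Dl X) :=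
  arExt M.l.flip ξ F

/-- First (iterated weak*-limit) extension of the right action:
`x'' · a'' = w*-lim_j lim_i x_j • a_i`. -/
def rExt (M : Bimodule A X) (ξ : Dl (Dl X)) (F : Dl (Dl A)) :
    Dl (Dl X) :=
  arExt M.r.flip ξ F

/-- Second extension of the right action: `x'' · a'' = w*-lim_i lim_j x_j • a_i`. -/
def rExt₂ (M : Bimodule A X) (ξ : Dl (Dl X)) (F : Dl (Dl A)) :
    Dl (Dl X) :=
  arExt M.r F ξ

/-- The topological centre of the right module action of `A` on `X`, i.e. the set of
`x'' ∈ X**` such that `a'' ↦ x'' · a''` is weak*-weak* continuous. -/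
def rTopCenter (M : Bimodule A X) : Set (Dl (Dl X)) :=
  {ξ | Continuous fun F : WeakDual ℂ (Dl A) => (M.rExt ξ F : WeakDual ℂ (Dl X))}

end Bimodule

/-- The topological centre of the bidual of a Banach algebra (with the first
Arens product): the set of `F ∈ A**` for which `G ↦ F □ G` is weak*-weak* continuous. -/
def arensTopCenter (A : Type u) [NonUnitalNormedRing A] [NormedSpace ℂ A]
    [SMulCommClass ℂ A A] [IsScalarTower ℂ A A] : Set (Dl (Dl A)) :=
  {F | Continuous fun G : WeakDual ℂ (Dl A) => (arensMul A F G : WeakDual ℂ (Dl A))}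

/- ## Adjoint maps -/

section DMap

variable {E F : Type*} [SeminormedAddCommGroup E] [NormedSpace ℂ E]
  [SeminormedAddCommGroup F] [NormedSpace ℂ F]

/-- The adjoint (dual map) of a bounded operator. -/
def dMap (f : E →L[ℂ] F) : Dl F →L[ℂ] Dl E :=
  (ContinuousLinearMap.compL ℂ E F ℂ).flip f

@[simp] lemma dMap_apply (f : E →L[ℂ] F) (g : Dl F) : dMap f g = g.comp f := rfl

/-- The canonical projection `X⁽⁴⁾ → X⁽²⁾`, i.e. the adjoint of the canonical
embedding `X* → X***`. -/
def Pmap (X : Type u) [SeminormedAddCommGroup X] [NormedSpace ℂ X] :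
    Dl (Dl (Dl (Dl X))) →L[ℂ] Dl (Dl X) :=
  dMap (inclDD (Dl X))

end DMap


/-!
A bimodule retract of `N` inherits `H¹(A, N) = 0`. Two retracts are relevant: a dual module `X*` is
a retract of `X***`, by the adjoint of `X → X**`, so odd duals can be lowered by two at a time; and
`A` is a retract of itself regarded as an ideal.

For the passage from weak amenability to arbitrary symmetric modules `M` over commutative `A`, each
`f ∈ M*` gives a bimodule map `m ↦ f(· m)` from `M` to `A*`. A derivation `D : A → M` followed by it
is a derivation into `A*`, hence zero, so `x · D b = 0` for all `x` and `b`. Thus `D` kills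
products, and these span a dense subspace: if `f ∈ A*` kills products then `a ↦ f(a) f` is a
derivation into `A*`, hence inner, and evaluating at `a` gives `f(a)² = 0`.
-/

section Retracts

variable {M N : BMod A}

/-- A bounded operator commuting with both module actions, i.e. a morphism of Banach
`A`-bimodules. -/
structure IsBimoduleHom (M N : BMod A) (T : M.X →L[ℂ] N.X) : Prop where
  map_l : ∀ a x, T (M.act.l a x) = N.act.l a (T x)
  map_r : ∀ a x, T (M.act.r a x) = N.act.r a (T x)

lemma IsDerivation.comp {D : A →L[ℂ] M.X} (hD : IsDerivation M D) {T : M.X →L[ℂ] N.X}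
    (hT : IsBimoduleHom M N T) : IsDerivation N (T.comp D) := fun a b => by
  simp only [comp_apply, hD a b, map_add, hT.map_l, hT.map_r]

lemma IsInner.comp {D : A →L[ℂ] M.X} (hD : IsInner M D) {T : M.X →L[ℂ] N.X}
    (hT : IsBimoduleHom M N T) : IsInner N (T.comp D) := by
  obtain ⟨x, hx⟩ := hD
  exact ⟨T x, fun a => by simp only [comp_apply, hx a, map_sub, hT.map_l, hT.map_r]⟩

lemma IsBimoduleHom.dMap {T : M.X →L[ℂ] N.X} (hT : IsBimoduleHom M N T) :
    IsBimoduleHom N.dualObj M.dualObj (dMap T) where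
  map_l := fun a (f : Dl N.X) =>
    ContinuousLinearMap.ext fun x => congrArg f (hT.map_r a x).symm
  map_r := fun a (f : Dl N.X) =>
    ContinuousLinearMap.ext fun x => congrArg f (hT.map_l a x).symm

lemma isBimoduleHom_inclDD (M : BMod A) : IsBimoduleHom M M.dualObj.dualObj (inclDD M.X) where
  map_l _ _ := rfl
  map_r _ _ := rfl

/-- `M` is a retract of `N` in the category of Banach `A`-bimodules and bounded bimodule maps, with
section `T` and retraction `P`. -/
def BMod.IsRetract (M N : BMod A) : Prop :=
  ∃ (T : M.X →L[ℂ] N.X) (P : N.X →L[ℂ] M.X),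
    IsBimoduleHom M N T ∧ IsBimoduleHom N M P ∧ ∀ x, P (T x) = x

lemma H1Zero.of_isRetract (hN : H1Zero N) (h : M.IsRetract N) : H1Zero M := by
  obtain ⟨T, P, hT, hP, hPT⟩ := h
  intro D hD
  have hPTD : P.comp (T.comp D) = D := ContinuousLinearMap.ext fun a => hPT (D a)
  exact hPTD ▸ (hN _ (hD.comp hT)).comp hP

lemma BMod.IsRetract.dualObj (h : M.IsRetract N) : M.dualObj.IsRetract N.dualObj := by
  obtain ⟨T, P, hT, hP, hPT⟩ := h
  exact ⟨dMap P, dMap T, hP.dMap, hT.dMap, fun (f : Dl M.X) =>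
    ContinuousLinearMap.ext fun x => congrArg f (hPT x)⟩

lemma BMod.IsRetract.iter (h : M.IsRetract N) : ∀ n, (M.iter n).IsRetract (N.iter n)
  | 0 => h
  | n + 1 => (h.iter n).dualObj

lemma BMod.dualObj_isRetract_tripleDual (M : BMod A) :
    M.dualObj.IsRetract M.dualObj.dualObj.dualObj :=
  ⟨inclDD (Dl M.X), dMap (inclDD M.X), isBimoduleHom_inclDD M.dualObj,
    (isBimoduleHom_inclDD M).dMap, fun _ => rfl⟩

lemma H1Zero.iter_one_of_iter_odd : ∀ {k : ℕ}, H1Zero (M.iter (2 * k + 1)) → H1Zero (M.iter 1)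
  | 0, h => h
  | k + 1, h => (h.of_isRetract (M.iter (2 * k)).dualObj_isRetract_tripleDual).iter_one_of_iter_odd

end Retracts

namespace ClosedIdeal

/-- The improper ideal: `A` as a closed two-sided ideal of itself. -/
def top (A : Type u) [NonUnitalNormedRing A] [NormedSpace ℂ A]
    [SMulCommClass ℂ A A] [IsScalarTower ℂ A A] : ClosedIdeal A where
  car := ⊤
  isClosed := isClosed_univ
  mul_mem_left _ _ _ := trivial
  mul_mem_right _ _ _ := trivial

lemma regBMod_isRetract_top : (regBMod A).IsRetract (top A).toBMod :=
  ⟨(ContinuousLinearMap.id ℂ A).codRestrict (top A).car fun _ => trivial, (top A).car.subtypeL,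
    ⟨fun _ _ => rfl, fun _ _ => rfl⟩, ⟨fun _ _ => rfl, fun _ _ => rfl⟩, fun _ => rfl⟩

end ClosedIdeal

lemma NIdeallyAmenable.nWeaklyAmenable {n : ℕ} (h : NIdeallyAmenable A n) : NWeaklyAmenable A n :=
  (h (.top A)).of_isRetract (ClosedIdeal.regBMod_isRetract_top.iter n)

section Symmetric

variable {M : BMod A}

/-- A symmetric bimodule: the left and right actions of `A` agree. -/
def BMod.IsSymmetric (M : BMod A) : Prop :=
  ∀ a x, M.act.l a x = M.act.r a x

lemma BMod.IsSymmetric.dualObj (h : M.IsSymmetric) : M.dualObj.IsSymmetric :=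
  fun a (f : Dl M.X) => ContinuousLinearMap.ext fun x => congrArg f (h a x).symm

lemma BMod.IsSymmetric.iter (h : M.IsSymmetric) : ∀ n, (M.iter n).IsSymmetric
  | 0 => h
  | n + 1 => (h.iter n).dualObj

lemma BMod.IsSymmetric.eq_zero_of_isInner (h : M.IsSymmetric) {D : A →L[ℂ] M.X}
    (hD : IsInner M D) : D = 0 := by
  obtain ⟨x, hx⟩ := hD
  ext a
  rw [hx a, h a x, sub_self, zero_apply]

lemma regBMod_isSymmetric (hcomm : ∀ a b : A, a * b = b * a) : (regBMod A).IsSymmetric :=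
  hcomm

lemma ClosedIdeal.toBMod_isSymmetric (hcomm : ∀ a b : A, a * b = b * a) (I : ClosedIdeal A) :
    I.toBMod.IsSymmetric :=
  fun a (x : I.car) => Subtype.ext (hcomm a x)

/-- The operator `m ↦ (x ↦ f (x · m))` from `M` to `A*` given by the coefficients of the left action
along a functional `f` on `M`. -/
def BMod.coeff (M : BMod A) (f : Dl M.X) : M.X →L[ℂ] Dl A :=
  (compL ℂ A M.X ℂ f).comp M.act.l.flip

lemma BMod.IsSymmetric.isBimoduleHom_coeff (hM : M.IsSymmetric)
    (hcomm : ∀ a b : A, a * b = b * a) (f : Dl M.X) :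
    IsBimoduleHom M (regBMod A).dualObj (M.coeff f) where
  map_l a m := ContinuousLinearMap.ext fun x => congrArg f (M.act.l_mul x a m).symm
  map_r a m := ContinuousLinearMap.ext fun (x : A) => congrArg f <|
    calc M.act.l x (M.act.r a m) = M.act.l x (M.act.l a m) := by rw [hM a m]
      _ = M.act.l (a * x) m := by rw [← M.act.l_mul, hcomm]

end Symmetric

namespace NWeaklyAmenable

lemma functional_eq_zero (h : NWeaklyAmenable A 1) {f : Dl A} (hf : ∀ a b, f (a * b) = 0) :
    f = 0 := by
  have hD : IsDerivation (regBMod A).dualObj (f.smulRight f) := fun a b =>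
    ContinuousLinearMap.ext fun (x : A) =>
      show f (a * b) * f x = f b * f (x * a) + f a * f (b * x) by
        simp only [hf, zero_mul, mul_zero, add_zero]
  obtain ⟨(φ : Dl A), hφ⟩ := h _ hD
  ext a
  have hsq : f a * f a = 0 :=
    calc f a * f a = φ (a * a) - φ (a * a) := congrArg (fun g : Dl A => g a) (hφ a)
      _ = 0 := sub_self _
  exact mul_self_eq_zero.mp hsq

lemma eq_zero_of_map_mul_eq_zero (h : NWeaklyAmenable A 1) {E : Type*} [NormedAddCommGroup E]
    [NormedSpace ℂ E] {T : A →L[ℂ] E} (hT : ∀ a b, T (a * b) = 0) : T = 0 := by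
  ext a
  refine SeparatingDual.eq_zero_of_forall_dual_eq_zero (R := ℂ) fun g => ?_
  have hgT : g.comp T = 0 := h.functional_eq_zero fun a b => by rw [comp_apply, hT, map_zero]
  exact congrArg (fun φ : Dl A => φ a) hgT

variable {M : BMod A} {D : A →L[ℂ] M.X}

lemma act_derivation_eq_zero (h : NWeaklyAmenable A 1) (hcomm : ∀ a b : A, a * b = b * a)
    (hM : M.IsSymmetric) (hD : IsDerivation M D) (a b : A) : M.act.l a (D b) = 0 := by
  refine SeparatingDual.eq_zero_of_forall_dual_eq_zero (R := ℂ) fun f => ?_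
  have hinner : IsInner (regBMod A).dualObj ((M.coeff f).comp D) :=
    h _ (hD.comp (hM.isBimoduleHom_coeff hcomm f))
  have hzero := (regBMod_isSymmetric hcomm).dualObj.eq_zero_of_isInner hinner
  exact congrArg (fun T : A →L[ℂ] Dl A => T b a) hzero

lemma derivation_eq_zero (h : NWeaklyAmenable A 1) (hcomm : ∀ a b : A, a * b = b * a)
    (hM : M.IsSymmetric) (hD : IsDerivation M D) : D = 0 :=
  h.eq_zero_of_map_mul_eq_zero fun a b => by
    rw [hD, ← hM, h.act_derivation_eq_zero hcomm hM hD, h.act_derivation_eq_zero hcomm hM hD,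
      add_zero]

lemma h1Zero_of_isSymmetric (h : NWeaklyAmenable A 1) (hcomm : ∀ a b : A, a * b = b * a)
    (hM : M.IsSymmetric) : H1Zero M := fun D hD =>
  ⟨0, fun a => by simp [h.derivation_eq_zero hcomm hM hD]⟩

end NWeaklyAmenable

theorem comm_weak_amenability_tfae_general (hcomm : ∀ a b : A, a * b = b * a) :
    List.TFAE [
      NWeaklyAmenable A 1,
      ∃ k : ℕ, NWeaklyAmenable A (2 * k + 1),
      NIdeallyAmenable A 1,
      ∃ k : ℕ, NIdeallyAmenable A (2 * k + 1),
      ∀ n : ℕ, 1 ≤ n → NIdeallyAmenable A n,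
      ∀ M : BMod A, M.IsSymmetric → H1Zero M] := by
  tfae_have 1 → 6 := fun h _ hM => h.h1Zero_of_isSymmetric hcomm hM
  tfae_have 6 → 5 := fun h n _ I => h _ ((I.toBMod_isSymmetric hcomm).iter n)
  tfae_have 5 → 3 := fun h => h 1 le_rfl
  tfae_have 3 → 4 := fun h => ⟨0, h⟩
  tfae_have 4 → 2 := fun ⟨k, h⟩ => ⟨k, h.nWeaklyAmenable⟩
  tfae_have 2 → 1 := fun ⟨_, h⟩ => H1Zero.iter_one_of_iter_odd h
  tfae_finish

/-- **Theorem 3.1.** For a commutative Banach algebra the following are equivalent: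
(i) weak amenability; (ii) `(2k+1)`-weak amenability for some `k ≥ 0`;
(iii) ideal amenability; (iv) `(2k+1)`-ideal amenability for some `k ≥ 0`;
(v) permanent ideal amenability. -/
theorem comm_weak_amenability_tfae
    {A : Type u} [NonUnitalNormedRing A] [NormedSpace ℂ A]
    [SMulCommClass ℂ A A] [IsScalarTower ℂ A A] [CompleteSpace A]
    (hcomm : ∀ a b : A, a * b = b * a) :
    (NWeaklyAmenable A 1 ↔ ∃ k : ℕ, NWeaklyAmenable A (2 * k + 1)) ∧
    (NWeaklyAmenable A 1 ↔ NIdeallyAmenable A 1) ∧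
    (NWeaklyAmenable A 1 ↔ ∃ k : ℕ, NIdeallyAmenable A (2 * k + 1)) ∧
    (NWeaklyAmenable A 1 ↔ ∀ n : ℕ, 1 ≤ n → NIdeallyAmenable A n) := by
  have h := comm_weak_amenability_tfae_general hcomm
  exact ⟨h.out 0 1, h.out 0 2, h.out 0 3, h.out 0 4⟩
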